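/- Define R̂^S(u) := Σ_{k=0}^{r} ((−1)^k/(2k)!)·a_k(u)·a_{r−k}(u)·I_{2k} ∈ Cl ⊗ Cl, where a_k(u) := Π_{j=0}^{k−1}(u/2 + j) (this is the even part of the Shankar–Witten R-operator with normalisation A(u) = 1), and for ε ∈ {+1,−1} define R̂^{εε}(u) := Σ_{k=0}^{⌊r/2⌋} (−1)^k·( Π_{m=1}^{k} (u−(2m−1))/(u+(2m−1)) )·p_{εε}·P_{r−2k}. Then for every u ∈ ℂ with u + (2m−1) ≠ 0 for all m = 1,...,⌊r/2⌋, the identity R̂^S(u) = ( Π_{k=0}^{r−1}(u+k) )·( R̂^{+1,+1}(u) + R̂^{−1,−1}(u) ) holds in Cl ⊗ Cl. -/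

import Mathlib

open scoped TensorProduct

noncomputable section

/-- The quadratic form `x₁² + ⋯ + x_{2r}²` on `ℂ^{2r}`. -/
def Qf (r : ℕ) : QuadraticForm ℂ (Fin (2*r) → ℂ) :=
  QuadraticMap.weightedSumSquares ℂ (fun _ : Fin (2*r) => (1:ℂ))

/-- The Clifford algebra of `Qf r`. -/
abbrev Cl (r : ℕ) := CliffordAlgebra (Qf r)

/-- The generators `Γ_i`. -/
def Γgen (r : ℕ) (i : Fin (2*r)) : Cl r :=
  CliffordAlgebra.ι (Qf r) (Pi.single i 1)

/-- The antisymmetrised products `Γ_{[i₁…i_k]}`. -/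
def Γbr (r k : ℕ) (i : Fin k → Fin (2*r)) : Cl r :=
  ((k.factorial : ℂ))⁻¹ •
    ∑ σ : Equiv.Perm (Fin k),
      ((Equiv.Perm.sign σ : ℤ) : ℂ) • (List.ofFn fun j => Γgen r (i (σ j))).prod

/-- The invariants `I_k ∈ Cl ⊗ Cl`. -/
def Ik (r k : ℕ) : Cl r ⊗[ℂ] Cl r :=
  ∑ i : Fin k → Fin (2*r), (Γbr r k i) ⊗ₜ[ℂ] (Γbr r k i)

/-- The split Casimir element `Ĉ = −I₂/(16(2r−2))`. -/
def sC (r : ℕ) : Cl r ⊗[ℂ] Cl r := (-(16*(2*(r:ℂ)-2))⁻¹) • Ik r 2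

/-- The top element `Γ_{2r+1} = (−i)^r Γ₁⋯Γ_{2r}`. -/
def Γtop (r : ℕ) : Cl r :=
  ((-Complex.I)^r) • (List.ofFn fun i : Fin (2*r) => Γgen r i).prod

/-- The chirality projector `p_ε = (1 + ε Γ_{2r+1})/2`. -/
def pCh (r : ℕ) (ε : ℂ) : Cl r := (2:ℂ)⁻¹ • (1 + ε • Γtop r)

/-- The chirality projectors `p_{εε'} = p_ε ⊗ p_{ε'}`. -/
def ppCh (r : ℕ) (ε ε' : ℂ) : Cl r ⊗[ℂ] Cl r := (pCh r ε) ⊗ₜ[ℂ] (pCh r ε')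

/-- The eigenvalues `c_k = (2k(2r−k) − r(2r−1))/(16(r−1))`. -/
def cEv (r k : ℕ) : ℂ :=
  (2*(k:ℂ)*(2*(r:ℂ)-(k:ℂ)) - (r:ℂ)*(2*(r:ℂ)-1)) / (16*((r:ℂ)-1))

/-- The spectral projectors `P_k = Π_{j≠k} (Ĉ − c_j)/(c_k − c_j)`. -/
def Pk (r k : ℕ) : Cl r ⊗[ℂ] Cl r :=
  (((List.range (r+1)).filter (fun j => j ≠ k)).map
    (fun j => (cEv r k - cEv r j)⁻¹ • (sC r - cEv r j • 1))).prod

/-- `P_r^S = (p_{++} + p_{−−})·P_r`. -/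
def PrS (r : ℕ) : Cl r ⊗[ℂ] Cl r := (ppCh r 1 1 + ppCh r (-1) (-1)) * Pk r r

/-- The ascending factorial `a_k(u) = (u/2)(u/2+1)⋯(u/2+k−1)`. -/
def asc (u : ℂ) (k : ℕ) : ℂ := ∏ j ∈ Finset.range k, (u/2 + (j:ℂ))

/-- The even part `R̂^S(u)` of the Shankar–Witten R-operator (with `A(u) = 1`). -/
def RShat (r : ℕ) (u : ℂ) : Cl r ⊗[ℂ] Cl r :=
  ∑ k ∈ Finset.range (r+1),
    (((-1:ℂ)^k / (((2*k).factorial : ℕ) : ℂ)) * asc u k * asc u (r-k)) • Ik r (2*k)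

/-- The braid-form solutions `R̂^{εε}(u)`. -/
def Rhat (r : ℕ) (ε : ℂ) (u : ℂ) : Cl r ⊗[ℂ] Cl r :=
  ∑ k ∈ Finset.range (r/2+1),
    ((-1:ℂ)^k * ∏ m ∈ Finset.range k, (u - (2*(m:ℂ)+1))/(u + (2*(m:ℂ)+1))) •
      (ppCh r ε ε * Pk r (r-2*k))

section GeneratingPolynomial

open Polynomial

/-- The generating polynomial `(1 - X)^p (1 + X)^q` of binary Krawtchouk values. -/
def krawtchoukGen (p q : ℕ) : ℂ[X] := (1 - X) ^ p * (1 + X) ^ q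

/-- The functional on generating polynomials that yields the eigenvalues of `RShat`. -/
def shankarWittenEv (r : ℕ) (u : ℂ) (f : ℂ[X]) : ℂ :=
  ∑ k ∈ Finset.range (r + 1), (-1 : ℂ) ^ k * asc u k * asc u (r - k) * f.coeff (2 * k)

theorem asc_succ (u : ℂ) (k : ℕ) : asc u (k + 1) = asc u k * (u / 2 + k) :=
  Finset.prod_range_succ _ _

theorem sum_choose_mul_asc_mul_asc (u : ℂ) (r : ℕ) :
    ∑ k ∈ Finset.range (r + 1), (r.choose k : ℂ) * (asc u k * asc u (r - k)) =
      ∏ k ∈ Finset.range r, (u + (k : ℂ)) := by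
  induction r with
  | zero => simp [asc]
  | succ r ih =>
    rw [Finset.prod_range_succ, ← ih, Finset.sum_mul,
      Finset.sum_choose_succ_mul (fun i j => asc u i * asc u j), ← Finset.sum_add_distrib]
    refine Finset.sum_congr rfl fun k hk => ?_
    have hk : k ≤ r := by simpa [Nat.lt_succ_iff] using hk
    rw [Nat.sub_add_comm hk, asc_succ, asc_succ, Nat.cast_sub hk]
    ring

theorem krawtchoukGen_derivative (p q : ℕ) :
    (1 - X ^ 2) * derivative (krawtchoukGen p q) =
      (C (q - p : ℂ) - C (p + q : ℂ) * X) * krawtchoukGen p q := by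
  have h (n : ℕ) (a : ℂ[X]) : a * (C (n : ℂ) * a ^ (n - 1)) = C (n : ℂ) * a ^ n := by
    rcases n with _ | n
    · simp
    · simp [pow_succ]; ring
  have h₁ := h p (1 - X)
  have h₂ := h q (1 + X)
  simp only [krawtchoukGen, derivative_mul, derivative_pow, derivative_sub, derivative_add,
    derivative_one, derivative_X, C_sub, C_add]
  linear_combination (-(1 + X) * (1 + X) ^ q) * h₁ + ((1 - X) * (1 - X) ^ p) * h₂

theorem natDegree_krawtchoukGen_le (p q : ℕ) : (krawtchoukGen p q).natDegree ≤ p + q := by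
  unfold krawtchoukGen
  compute_degree

theorem reflect_krawtchoukGen (p q : ℕ) :
    reflect (p + q) (krawtchoukGen p q) = (-1) ^ p * krawtchoukGen p q := by
  have hpow (a : ℂ[X]) (ha : a.natDegree ≤ 1) (n : ℕ) :
      reflect n (a ^ n) = reflect 1 a ^ n := by
    induction n with
    | zero => simp
    | succ n ih =>
      rw [pow_succ, reflect_mul _ _ ((natDegree_pow_le_of_le n ha).trans (by simp)) ha, ih,
        pow_succ]
  have h₁ : (1 - X : ℂ[X]).natDegree ≤ 1 := by compute_degree
  have h₂ : (1 + X : ℂ[X]).natDegree ≤ 1 := by compute_degree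
  have hX : reflect 1 (X : ℂ[X]) = 1 := by
    simpa only [pow_one, pow_zero, revAt_le le_rfl, Nat.sub_self] using reflect_monomial (R := ℂ) 1 1
  have h1 : reflect 1 (1 : ℂ[X]) = X := by simp [reflect_one]
  rw [krawtchoukGen, reflect_mul _ _ ((natDegree_pow_le_of_le p h₁).trans (by simp))
    ((natDegree_pow_le_of_le q h₂).trans (by simp)), hpow _ h₁, hpow _ h₂, reflect_sub,
    reflect_add, hX, h1, ← mul_assoc, ← mul_pow]
  ring

theorem krawtchoukGen_coeff_symm (p q k : ℕ) (hk : k ≤ p + q) :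
    (krawtchoukGen p q).coeff (p + q - k) = (-1) ^ p * (krawtchoukGen p q).coeff k := by
  have h := congrArg (fun f => coeff f k) (reflect_krawtchoukGen p q)
  have hC : ((-1 : ℂ[X]) ^ p) = C ((-1) ^ p) := by simp
  simpa only [coeff_reflect, revAt_le hk, hC, coeff_C_mul] using h

theorem krawtchoukGen_comm_coeff (p q k : ℕ) :
    (krawtchoukGen q p).coeff (2 * k) = (krawtchoukGen p q).coeff (2 * k) := by
  have h : (krawtchoukGen p q).comp (C (-1) * X) = krawtchoukGen q p := by
    simp [krawtchoukGen, mul_comm, sub_eq_add_neg]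
  rw [← h, comp_C_mul_X_coeff]
  simp

theorem shankarWittenEv_comm (r : ℕ) (u : ℂ) (p q : ℕ) :
    shankarWittenEv r u (krawtchoukGen q p) = shankarWittenEv r u (krawtchoukGen p q) := by
  simp only [shankarWittenEv, krawtchoukGen_comm_coeff p q]

theorem shankarWittenEv_eq_zero (r : ℕ) (u : ℂ) (p q : ℕ) (hpq : p + q = 2 * r)
    (hodd : Odd (r + p)) : shankarWittenEv r u (krawtchoukGen p q) = 0 := by
  have h : shankarWittenEv r u (krawtchoukGen p q) =
      (-1) ^ (r + p) * shankarWittenEv r u (krawtchoukGen p q) := by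
    conv_lhs => rw [shankarWittenEv, ← Finset.sum_range_reflect]
    rw [shankarWittenEv, Finset.mul_sum]
    refine Finset.sum_congr rfl fun k hk => ?_
    have hk : k ≤ r := by simpa [Nat.lt_succ_iff] using hk
    have e₁ : r + 1 - 1 - k = r - k := by omega
    have e₂ : 2 * (r - k) = p + q - 2 * k := by omega
    have e₃ : r - (r - k) = k := by omega
    have e₄ : (-1 : ℂ) ^ (r - k) = (-1) ^ r * (-1) ^ k := by
      rw [← pow_add]
      exact neg_one_pow_congr (by grind)
    rw [e₁, e₂, e₃, e₄, krawtchoukGen_coeff_symm p q _ (by omega)]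
    ring
  rw [hodd.neg_one_pow] at h
  linear_combination h / 2

theorem shankarWittenEv_krawtchoukGen_self (r : ℕ) (u : ℂ) :
    shankarWittenEv r u (krawtchoukGen r r) = ∏ k ∈ Finset.range r, (u + (k : ℂ)) := by
  have h : krawtchoukGen r r = expand ℂ 2 ((1 - X) ^ r) := by
    simp only [krawtchoukGen, ← mul_pow, map_pow, map_sub, map_one, expand_X]
    ring
  have hc (k : ℕ) : ((1 - X : ℂ[X]) ^ r).coeff k = (-1) ^ k * r.choose k := by
    have : (1 - X : ℂ[X]) ^ r = ((1 + X) ^ r).comp (C (-1) * X) := by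
      simp [sub_eq_add_neg]
    rw [this, comp_C_mul_X_coeff, coeff_one_add_X_pow, mul_comm]
  rw [← sum_choose_mul_asc_mul_asc, shankarWittenEv, h]
  refine Finset.sum_congr rfl fun k _ => ?_
  rw [coeff_expand_mul' two_pos, hc]
  have : (-1 : ℂ) ^ k * (-1) ^ k = 1 := by rw [← mul_pow]; simp
  linear_combination (asc u k * asc u (r - k) * r.choose k) * this

theorem shankarWittenEv_add (r : ℕ) (u : ℂ) (f g : ℂ[X]) :
    shankarWittenEv r u (f + g) = shankarWittenEv r u f + shankarWittenEv r u g := by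
  simp [shankarWittenEv, mul_add, Finset.sum_add_distrib]

theorem shankarWittenEv_C_mul (r : ℕ) (u a : ℂ) (f : ℂ[X]) :
    shankarWittenEv r u (C a * f) = a * shankarWittenEv r u f := by
  simp only [shankarWittenEv, coeff_C_mul, Finset.mul_sum]
  exact Finset.sum_congr rfl fun k _ => by ring

theorem shankarWittenEv_derivative_identity (r : ℕ) (u : ℂ) (h : ℂ[X])
    (hh : h.natDegree ≤ 2 * r) :
    shankarWittenEv (r + 1) u (C u * ((1 + X ^ 2) * h) +
      (X * derivative h - X ^ 2 * (X * derivative h) + C (2 * r : ℂ) * (X ^ 2 * h))) = 0 := by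
  have hX (n : ℕ) : (X * derivative h).coeff n = n * h.coeff n := by
    rcases n with _ | n
    · simp
    · rw [coeff_X_mul, coeff_derivative]; push_cast; ring
  have h0 : h.coeff (2 * (r + 1)) = 0 := coeff_eq_zero_of_natDegree_lt (by omega)
  have hs (f : ℂ[X]) (k : ℕ) : (X ^ 2 * f).coeff (2 * (k + 1)) = f.coeff (2 * k) := by
    rw [mul_add, mul_one, coeff_X_pow_mul]
  have hz (f : ℂ[X]) : (X ^ 2 * f).coeff (2 * 0) = 0 := by simp
  set ℓ : ℕ → ℂ := fun k => (-1 : ℂ) ^ k * asc u k * asc u (r + 1 - k) with hℓ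
  have key : ∑ k ∈ Finset.range (r + 1 + 1), ℓ k * (u + 2 * k) * h.coeff (2 * k) +
      ∑ k ∈ Finset.range (r + 1 + 1), ℓ k * (C u * (X ^ 2 * h) +
        (C (2 * r : ℂ) * (X ^ 2 * h) - X ^ 2 * (X * derivative h))).coeff (2 * k) = 0 := by
    rw [Finset.sum_range_succ, h0, Finset.sum_range_succ' (n := r + 1)]
    simp only [coeff_add, coeff_sub, coeff_C_mul, hz, hs, hX]
    simp only [mul_zero, add_zero, sub_zero]
    rw [← Finset.sum_add_distrib]
    refine Finset.sum_eq_zero fun k hk => ?_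
    have hk : k ≤ r := by simpa [Nat.lt_succ_iff] using hk
    have e : r + 1 - (k + 1) = r - k := by omega
    simp only [hℓ, e, Nat.sub_add_comm hk, asc_succ, Nat.cast_sub hk]
    push_cast
    ring
  rw [← key, shankarWittenEv, ← Finset.sum_add_distrib]
  refine Finset.sum_congr rfl fun k _ => ?_
  simp only [add_mul, one_mul, coeff_add, coeff_sub, coeff_C_mul, hX, hℓ]
  push_cast
  ring

theorem shankarWittenEv_recurrence (r : ℕ) (u : ℂ) (p q : ℕ) (hpq : p + q = 2 * r) :
    (2 * u + (q - p)) * shankarWittenEv (r + 1) u (krawtchoukGen p (q + 2)) +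
      (2 * u - (q - p)) * shankarWittenEv (r + 1) u (krawtchoukGen (p + 2) q) = 0 := by
  have h := shankarWittenEv_derivative_identity r u (krawtchoukGen p q)
    (hpq ▸ natDegree_krawtchoukGen_le p q)
  have hN : (2 * r : ℂ) = p + q := by exact_mod_cast hpq.symm
  rw [← shankarWittenEv_C_mul, ← shankarWittenEv_C_mul, ← shankarWittenEv_add,
    ← mul_zero (4 : ℂ), ← h, ← shankarWittenEv_C_mul, hN]
  congr 1
  have hd := krawtchoukGen_derivative p q
  simp only [krawtchoukGen, pow_add, C_sub, C_add, C_mul, C_ofNat] at hd ⊢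
  linear_combination (-4 * X) * hd

theorem shankarWittenEv_krawtchoukGen (r : ℕ) (u : ℂ)
    (hu : ∀ m : ℕ, 1 ≤ m → m ≤ r / 2 → u + (2 * (m : ℂ) - 1) ≠ 0) (j : ℕ) (hj : 2 * j ≤ r) :
    shankarWittenEv r u (krawtchoukGen (r - 2 * j) (r + 2 * j)) =
      (∏ k ∈ Finset.range r, (u + (k : ℂ))) *
        ((-1 : ℂ) ^ j *
          ∏ m ∈ Finset.range j, (u - (2 * (m : ℂ) + 1)) / (u + (2 * (m : ℂ) + 1))) := by
  induction j with
  | zero => simp [shankarWittenEv_krawtchoukGen_self]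
  | succ j ih =>
    have hne : u + (2 * (j : ℂ) + 1) ≠ 0 := by
      have := hu (j + 1) (by omega) (by omega)
      push_cast at this
      convert this using 1
      ring
    obtain ⟨t, rfl⟩ : ∃ t, r = t + 2 * (j + 1) := ⟨r - 2 * (j + 1), by omega⟩
    have hrec := shankarWittenEv_recurrence (t + 2 * j + 1) u t (t + 4 * j + 2) (by ring)
    have ih := ih (by omega)
    rw [show t + 2 * (j + 1) - 2 * j = t + 2 by omega,
      show t + 2 * (j + 1) + 2 * j = t + 4 * j + 2 by ring] at ih
    rw [show t + 2 * j + 1 + 1 = t + 2 * (j + 1) by ring, ih] at hrec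
    rw [Nat.add_sub_cancel, show t + 2 * (j + 1) + 2 * (j + 1) = t + 4 * j + 2 + 2 by ring,
      Finset.prod_range_succ]
    push_cast at hrec
    field_simp
    linear_combination hrec / 2

end GeneratingPolynomial

theorem prod_ofFn_comp_swap_castSucc_succ {A : Type*} [Ring A] {n : ℕ} (h : Fin (n + 1) → A)
    (j : Fin n) (hj : h j.castSucc * h j.succ = -(h j.succ * h j.castSucc)) :
    (List.ofFn (h ∘ Equiv.swap j.castSucc j.succ)).prod = -(List.ofFn h).prod := by
  induction n with
  | zero => exact j.elim0
  | succ n ih =>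
    cases j using Fin.cases with
    | zero =>
      have e (i : Fin n) : Equiv.swap (0 : Fin (n + 2)) (Fin.succ 0) i.succ.succ = i.succ.succ :=
        Equiv.swap_apply_of_ne_of_ne (Fin.succ_ne_zero _)
          ((Fin.succ_injective _).ne (Fin.succ_ne_zero _))
      rw [List.ofFn_succ, List.ofFn_succ, List.ofFn_succ, List.ofFn_succ (f := fun i => h i.succ)]
      simp only [List.prod_cons, Function.comp_apply, Fin.castSucc_zero, Equiv.swap_apply_left,
        Equiv.swap_apply_right, e, ← mul_assoc] at hj ⊢
      rw [hj, neg_mul, neg_neg]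
    | succ j =>
      have e (i : Fin (n + 1)) : Equiv.swap j.succ.castSucc j.succ.succ i.succ =
          (Equiv.swap j.castSucc j.succ i).succ := by
        rw [← Fin.succ_castSucc]
        exact ((Fin.succ_injective _).swap_apply _ _ _)
      have e₀ : Equiv.swap j.succ.castSucc j.succ.succ (0 : Fin (n + 2)) = 0 :=
        Equiv.swap_apply_of_ne_of_ne (by rw [← Fin.succ_castSucc]; exact (Fin.succ_ne_zero _).symm)
          (Fin.succ_ne_zero _).symm
      have := ih (fun i => h i.succ) j hj
      rw [List.ofFn_succ, List.ofFn_succ (f := h), List.prod_cons, List.prod_cons]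
      simp only [Function.comp_apply, e, e₀]
      rw [Function.comp_def] at this
      rw [this, mul_neg]

/-- A product of pairwise anticommuting elements is alternating in its factors. -/
theorem prod_ofFn_comp_perm {A : Type*} [Ring A] {n : ℕ} (h : Fin n → A)
    (hh : ∀ i j, i ≠ j → h i * h j = -(h j * h i)) (σ : Equiv.Perm (Fin n)) :
    (List.ofFn (h ∘ σ)).prod = (Equiv.Perm.sign σ : ℤ) * (List.ofFn h).prod := by
  rcases n with _ | n
  · simp [Subsingleton.elim σ 1]
  induction σ using Submonoid.induction_of_closure_eq_top_right
    (Equiv.Perm.mclosure_swap_castSucc_succ n) with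
  | one => simp
  | mul_right σ τ hτ ih =>
    obtain ⟨j, rfl⟩ := hτ
    rw [Equiv.Perm.coe_mul, ← Function.comp_assoc, prod_ofFn_comp_swap_castSucc_succ _ j
      (hh (σ _) (σ _) (σ.injective.ne (Fin.castSucc_lt_succ).ne)), ih, Equiv.Perm.sign_mul,
      Equiv.Perm.sign_swap (Fin.castSucc_lt_succ).ne]
    simp

theorem prod_one_add_C_mul_X_coeff {R ι : Type*} [CommRing R] [Fintype ι] (s : ι → R) (k : ℕ) :
    (∏ i, (1 + Polynomial.C (s i) * Polynomial.X)).coeff k =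
      ∑ t ∈ Finset.univ.powersetCard k, ∏ i ∈ t, s i := by
  simp only [Finset.prod_one_add, Finset.prod_mul_distrib, Finset.prod_const,
    Polynomial.finsetSum_coeff, ← map_prod, Polynomial.coeff_C_mul_X_pow]
  rw [Finset.powersetCard_eq_filter, Finset.sum_filter]
  simp only [eq_comm]

theorem card_injective_image_eq {ι : Type*} [Fintype ι] [DecidableEq ι] {k : ℕ} (t : Finset ι)
    (ht : t.card = k) :
    (Finset.univ.filter fun i : Fin k → ι =>
      Function.Injective i ∧ Finset.univ.image i = t).card = k.factorial := by
  have e : Fin k ≃ t := (Finset.equivFinOfCardEq ht).symm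
  have hk : k.factorial = (Finset.univ : Finset (Equiv.Perm (Fin k))).card := by
    simp [Fintype.card_perm]
  rw [hk, eq_comm]
  refine Finset.card_bij (fun σ _ j => (e (σ j) : ι)) ?_ ?_ ?_
  · intro σ _
    simp only [Finset.mem_filter_univ]
    refine ⟨Subtype.val_injective.comp (e.injective.comp σ.injective), ?_⟩
    ext x
    simp only [Finset.mem_image, Finset.mem_univ, true_and]
    constructor
    · rintro ⟨j, rfl⟩
      exact (e (σ j)).2
    · intro hx
      exact ⟨σ.symm (e.symm ⟨x, hx⟩), by simp⟩
  · intro σ _ τ _ h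
    ext j : 1
    exact e.injective (Subtype.val_injective (congrFun h j))
  · intro i hi
    simp only [Finset.mem_filter_univ] at hi
    obtain ⟨hi, rfl⟩ := hi
    have hmem (j : Fin k) : i j ∈ Finset.univ.image i := by simp
    have hinj : Function.Injective fun j => e.symm ⟨i j, hmem j⟩ := fun a b h =>
      hi (congrArg Subtype.val (e.symm.injective h))
    exact ⟨Equiv.ofBijective _ (Finite.injective_iff_bijective.mp hinj), Finset.mem_univ _, by
      ext j; simp⟩

theorem sum_injective_prod {R ι : Type*} [CommRing R] [Fintype ι] [DecidableEq ι]
    (s : ι → R) (k : ℕ) :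
    (∑ i : Fin k → ι, if Function.Injective i then ∏ j, s (i j) else 0) =
      k.factorial * (∏ i, (1 + Polynomial.C (s i) * Polynomial.X)).coeff k := by
  rw [prod_one_add_C_mul_X_coeff, Finset.mul_sum, ← Finset.sum_filter,
    ← Finset.sum_fiberwise_of_maps_to (g := fun i => Finset.univ.image i)
      (t := Finset.univ.powersetCard k)]
  · refine Finset.sum_congr rfl fun t ht => ?_
    rw [Finset.filter_filter, ← card_injective_image_eq t (Finset.mem_powersetCard.mp ht).2,
      ← nsmul_eq_mul, ← Finset.sum_const]
    refine Finset.sum_congr rfl fun i hi => ?_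
    simp only [Finset.mem_filter_univ] at hi
    rw [← hi.2, Finset.prod_image hi.1.injOn]
  · intro i hi
    simp only [Finset.mem_filter_univ] at hi
    simp [Finset.mem_powersetCard, Finset.card_image_of_injective _ hi]

theorem eq_zero_of_mul_eigenvector {A : Type*} [Ring A] [Algebra ℂ A] {n : ℕ} (y : Fin n → A)
    (hsq : ∀ i, y i * y i = 1) (hcomm : ∀ i j, y i * y j = y j * y i) (x : A)
    (hx : ∀ (s : Fin n → ℂ) (w : A), (∀ i, s i = 1 ∨ s i = -1) → (∀ i, y i * w = s i • w) →
      x * w = 0) : x = 0 := by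
  suffices h : ∀ t : Finset (Fin n),
      (∀ w : A, (∀ i ∈ t, y i * w = w ∨ y i * w = -w) → x * w = 0) → x = 0 by
    refine h Finset.univ fun w hw => ?_
    have (i : Fin n) : ∃ c : ℂ, (c = 1 ∨ c = -1) ∧ y i * w = c • w := by
      rcases hw i (Finset.mem_univ i) with h | h
      · exact ⟨1, by simp [h]⟩
      · exact ⟨-1, by simp [h]⟩
    choose s hs hs' using this
    exact hx s w hs hs'
  intro t
  induction t using Finset.induction_on with
  | empty => exact fun h => by simpa using h 1
  | insert a t _ ih =>
    refine fun h => ih fun w hw => ?_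
    have hp : x * (w + y a * w) = 0 := by
      refine h _ fun i hi => ?_
      rcases Finset.mem_insert.mp hi with rfl | hi
      · left
        rw [mul_add, ← mul_assoc, hsq, one_mul, add_comm]
      · rw [mul_add, ← mul_assoc, hcomm, mul_assoc]
        rcases hw i hi with h | h <;> simp [h, add_comm]
    have hm : x * (w - y a * w) = 0 := by
      refine h _ fun i hi => ?_
      rcases Finset.mem_insert.mp hi with rfl | hi
      · right
        rw [mul_sub, ← mul_assoc, hsq, one_mul, neg_sub]
      · rw [mul_sub, ← mul_assoc, hcomm, mul_assoc]
        rcases hw i hi with h | h <;> simp [h, add_comm, sub_eq_add_neg]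
    have h2 : (2 : ℂ) • (x * w) = 0 := by
      rw [two_smul, ← add_zero (0 : A)]
      nth_rewrite 1 [← hp]
      rw [← hm, ← mul_add, ← mul_add]
      congr 1
      abel
    exact (smul_eq_zero.mp h2).resolve_left two_ne_zero

theorem list_prod_mul_eigenvector {A κ : Type*} [Ring A] [Algebra ℂ A] (l : List κ) (f : κ → A)
    (c : κ → ℂ) (w : A) (h : ∀ a ∈ l, f a * w = c a • w) :
    (l.map f).prod * w = (l.map c).prod • w := by
  induction l with
  | nil => simp
  | cons a l ih =>
    rw [List.map_cons, List.prod_cons, mul_assoc, ih fun b hb => h b (List.mem_cons_of_mem _ hb),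
      mul_smul_comm, h a List.mem_cons_self, smul_smul, List.map_cons, List.prod_cons, mul_comm]

theorem Γgen_mul_self (r : ℕ) (i : Fin (2 * r)) : Γgen r i * Γgen r i = 1 := by
  have h : Qf r (Pi.single i 1) = 1 := by
    simp [Qf, QuadraticMap.weightedSumSquares_apply, Pi.single_apply]
  rw [Γgen, CliffordAlgebra.ι_sq_scalar, h, map_one]

theorem Γgen_mul_comm_of_ne (r : ℕ) {i j : Fin (2 * r)} (hij : i ≠ j) :
    Γgen r i * Γgen r j = -(Γgen r j * Γgen r i) := by
  refine CliffordAlgebra.ι_mul_ι_comm_of_isOrtho ?_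
  rw [QuadraticMap.isOrtho_def]
  simp [Qf, QuadraticMap.weightedSumSquares_apply, Pi.single_apply, mul_add, Finset.sum_add_distrib,
    hij, hij.symm]

theorem Γbr_of_injective (r k : ℕ) (i : Fin k → Fin (2 * r)) (hi : Function.Injective i) :
    Γbr r k i = (List.ofFn fun j => Γgen r (i j)).prod := by
  have h (σ : Equiv.Perm (Fin k)) :
      ((Equiv.Perm.sign σ : ℤ) : ℂ) • (List.ofFn fun j => Γgen r (i (σ j))).prod =
        (List.ofFn fun j => Γgen r (i j)).prod := by
    have := prod_ofFn_comp_perm (fun j => Γgen r (i j))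
      (fun a b hab => Γgen_mul_comm_of_ne r (hi.ne hab)) σ
    rw [Function.comp_def] at this
    rw [this]
    rcases Int.units_eq_one_or (Equiv.Perm.sign σ) with h | h <;> simp [h]
  rw [Γbr, Finset.sum_congr rfl fun σ _ => h σ, Finset.sum_const, Finset.card_univ,
    Fintype.card_perm, Fintype.card_fin, ← Nat.cast_smul_eq_nsmul ℂ, smul_smul,
    inv_mul_cancel₀ (Nat.cast_ne_zero.mpr k.factorial_ne_zero), one_smul]

theorem Γbr_of_not_injective (r k : ℕ) (i : Fin k → Fin (2 * r)) (hi : ¬Function.Injective i) :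
    Γbr r k i = 0 := by
  obtain ⟨a, b, hab, hne⟩ := Function.not_injective_iff.mp hi
  have hi (j : Fin k) : i (Equiv.swap a b j) = i j := by
    rw [Equiv.swap_apply_def]
    split_ifs <;> simp_all
  set S : Cl r := ∑ σ : Equiv.Perm (Fin k),
    ((Equiv.Perm.sign σ : ℤ) : ℂ) • (List.ofFn fun j => Γgen r (i (σ j))).prod with hS
  have h : S = -S := by
    conv_lhs => rw [hS, ← Equiv.sum_comp (Equiv.mulLeft (Equiv.swap a b))]
    rw [hS, ← Finset.sum_neg_distrib]
    refine Finset.sum_congr rfl fun σ _ => ?_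
    simp [hi, Equiv.Perm.sign_swap hne]
  have hS0 : (2 : ℂ) • S = 0 := by
    rw [two_smul]
    nth_rewrite 1 [h]
    exact neg_add_cancel S
  rw [Γbr, ← hS, (smul_eq_zero.mp hS0).resolve_left two_ne_zero, smul_zero]

theorem list_prod_tmul_self {A : Type*} [Ring A] [Algebra ℂ A] (l : List A) :
    l.prod ⊗ₜ[ℂ] l.prod = (l.map fun a => a ⊗ₜ[ℂ] a).prod := by
  induction l with
  | nil => rfl
  | cons a l ih =>
    rw [List.prod_cons, ← Algebra.TensorProduct.tmul_mul_tmul, ih, List.map_cons, List.prod_cons]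

theorem prod_Γgen_tmul_mul_eigenvector {r k : ℕ} {s : Fin (2 * r) → ℂ} {w : Cl r ⊗[ℂ] Cl r}
    (hw : ∀ i, (Γgen r i ⊗ₜ[ℂ] Γgen r i) * w = s i • w) (i : Fin k → Fin (2 * r)) :
    (List.ofFn fun j => Γgen r (i j)).prod ⊗ₜ[ℂ] (List.ofFn fun j => Γgen r (i j)).prod * w =
      (∏ j, s (i j)) • w := by
  rw [list_prod_tmul_self, List.ofFn_eq_map, List.map_map, Function.comp_def,
    list_prod_mul_eigenvector _ _ (fun j => s (i j)) w fun j _ => hw (i j), ← List.ofFn_eq_map,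
    List.prod_ofFn]

theorem Ik_mul_eigenvector {r : ℕ} {s : Fin (2 * r) → ℂ} {w : Cl r ⊗[ℂ] Cl r}
    (hw : ∀ i, (Γgen r i ⊗ₜ[ℂ] Γgen r i) * w = s i • w) (k : ℕ) :
    Ik r k * w =
      (k.factorial * (∏ i, (1 + Polynomial.C (s i) * Polynomial.X)).coeff k : ℂ) • w := by
  rw [← sum_injective_prod, Ik, Finset.sum_mul, Finset.sum_smul]
  refine Finset.sum_congr rfl fun i _ => ?_
  split_ifs with hi
  · rw [Γbr_of_injective r k i hi, prod_Γgen_tmul_mul_eigenvector hw]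
  · rw [Γbr_of_not_injective r k i hi, TensorProduct.zero_tmul, zero_mul, zero_smul]

theorem RShat_mul_eigenvector {r : ℕ} (u : ℂ) {s : Fin (2 * r) → ℂ} {w : Cl r ⊗[ℂ] Cl r}
    (hw : ∀ i, (Γgen r i ⊗ₜ[ℂ] Γgen r i) * w = s i • w) :
    RShat r u * w =
      shankarWittenEv r u (∏ i, (1 + Polynomial.C (s i) * Polynomial.X)) • w := by
  rw [RShat, shankarWittenEv, Finset.sum_mul, Finset.sum_smul]
  refine Finset.sum_congr rfl fun k _ => ?_
  rw [smul_mul_assoc, Ik_mul_eigenvector hw, smul_smul]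
  congr 1
  have : (((2 * k).factorial : ℕ) : ℂ) ≠ 0 := Nat.cast_ne_zero.mpr (Nat.factorial_ne_zero _)
  field_simp

theorem two_mul_krawtchoukGen_coeff_two (p q : ℕ) :
    2 * (krawtchoukGen p q).coeff 2 = (q - p : ℂ) ^ 2 - (p + q) := by
  have h := krawtchoukGen_derivative p q
  have h0 : (krawtchoukGen p q).coeff 0 = 1 := by
    simp [krawtchoukGen, Polynomial.coeff_zero_eq_eval_zero]
  have h1 := congrArg (fun f => f.coeff 0) h
  have h2 := congrArg (fun f => f.coeff 1) h
  simp only [sub_mul, one_mul, mul_assoc, Polynomial.coeff_sub, Polynomial.coeff_C_mul,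
    Polynomial.coeff_X_pow_mul', Polynomial.coeff_derivative, Polynomial.mul_coeff_zero,
    Polynomial.coeff_X_zero, Polynomial.coeff_X_mul, h0] at h1 h2
  norm_num at h1 h2
  rw [h1] at h2
  linear_combination h2

theorem sC_mul_eigenvector {r : ℕ} (hr : 2 ≤ r) {s : Fin (2 * r) → ℂ} {w : Cl r ⊗[ℂ] Cl r}
    (hw : ∀ i, (Γgen r i ⊗ₜ[ℂ] Γgen r i) * w = s i • w) {p q m : ℕ}
    (hs : ∏ i, (1 + Polynomial.C (s i) * Polynomial.X) = krawtchoukGen p q)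
    (hpq : p + q = 2 * r) (hm : m = p ∨ m = q) :
    sC r * w = cEv r m • w := by
  have hq : (q : ℂ) = 2 * r - p := by
    rw [eq_sub_iff_add_eq']
    exact_mod_cast hpq
  have h2 := two_mul_krawtchoukGen_coeff_two p q
  have hr1 : (r : ℂ) - 1 ≠ 0 := sub_ne_zero.mpr (by exact_mod_cast (by omega : r ≠ 1))
  rw [sC, smul_mul_assoc, Ik_mul_eigenvector hw, smul_smul, hs, Nat.factorial_two, Nat.cast_two,
    h2, cEv]
  congr 1
  have e : (2 * r - 2 : ℂ) = 2 * (r - 1) := by ring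
  rw [e]
  rcases hm with rfl | rfl
  · rw [hq]
    field_simp
    ring
  · rw [show (p : ℂ) = 2 * r - m by rw [hq]; ring]
    field_simp
    ring

theorem cEv_injOn {r : ℕ} (hr : 2 ≤ r) : Set.InjOn (cEv r) (Set.Iic r) := by
  intro j hj k hk h
  have hr1 : (r : ℂ) - 1 ≠ 0 := sub_ne_zero.mpr (by exact_mod_cast (by omega : r ≠ 1))
  rw [cEv, cEv, div_left_inj' (mul_ne_zero (by norm_num) hr1)] at h
  obtain ⟨a, rfl⟩ := Nat.exists_eq_add_of_le (Set.mem_Iic.mp hj)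
  obtain ⟨b, hb⟩ := Nat.exists_eq_add_of_le (Set.mem_Iic.mp hk)
  have hb' : (k : ℂ) = j + a - b := by
    rw [eq_sub_iff_add_eq]
    exact_mod_cast hb.symm
  have hab : (a : ℂ) ^ 2 = b ^ 2 := by
    rw [hb'] at h
    push_cast at h
    linear_combination -h / 2
  have : a = b := Nat.pow_left_injective two_ne_zero (by exact_mod_cast hab)
  omega

theorem Pk_mul_eigenvector {r k m : ℕ} (hr : 2 ≤ r) (hk : k ≤ r) (hm : m ≤ r)
    {w : Cl r ⊗[ℂ] Cl r} (hw : sC r * w = cEv r m • w) :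
    Pk r k * w = if k = m then w else 0 := by
  rw [Pk, list_prod_mul_eigenvector _ _ (fun j => (cEv r k - cEv r j)⁻¹ * (cEv r m - cEv r j)) w
    fun j _ => by
      rw [smul_mul_assoc, sub_mul, hw, smul_mul_assoc, one_mul, ← sub_smul, smul_smul]]
  split_ifs with h
  · subst h
    rw [List.prod_eq_one, one_smul]
    intro x hx
    simp only [List.mem_map, List.mem_filter, List.mem_range, decide_eq_true_eq] at hx
    obtain ⟨j, ⟨hj, hjk⟩, rfl⟩ := hx
    exact inv_mul_cancel₀ (sub_ne_zero.mpr fun h =>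
      hjk (cEv_injOn hr (Set.mem_Iic.mpr (Nat.lt_succ_iff.mp hj)) hk h.symm))
  · rw [List.prod_eq_zero, zero_smul]
    simp only [List.mem_map, List.mem_filter, List.mem_range, decide_eq_true_eq]
    exact ⟨m, ⟨Nat.lt_succ_of_le hm, Ne.symm h⟩, by simp⟩

theorem ppCh_add_ppCh (r : ℕ) :
    ppCh r 1 1 + ppCh r (-1) (-1) = (2 : ℂ)⁻¹ • (1 + Γtop r ⊗ₜ[ℂ] Γtop r) := by
  simp only [ppCh, pCh, TensorProduct.tmul_smul, ← TensorProduct.smul_tmul',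
    TensorProduct.add_tmul, TensorProduct.tmul_add, one_smul, neg_smul, TensorProduct.neg_tmul,
    TensorProduct.tmul_neg, Algebra.TensorProduct.one_def]
  module

theorem ppCh_add_ppCh_mul_eigenvector {r : ℕ} {s : Fin (2 * r) → ℂ} {w : Cl r ⊗[ℂ] Cl r}
    (hw : ∀ i, (Γgen r i ⊗ₜ[ℂ] Γgen r i) * w = s i • w) :
    (ppCh r 1 1 + ppCh r (-1) (-1)) * w = ((1 + (-1) ^ r * ∏ i, s i) / 2) • w := by
  have h := prod_Γgen_tmul_mul_eigenvector hw id
  have hI : (-Complex.I) ^ r * (-Complex.I) ^ r = (-1) ^ r := by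
    rw [← mul_pow]
    simp
  simp only [id] at h
  rw [ppCh_add_ppCh, Γtop, TensorProduct.tmul_smul, ← TensorProduct.smul_tmul', smul_smul, hI,
    smul_mul_assoc, add_mul, smul_mul_assoc, h, one_mul]
  module

theorem exists_krawtchoukGen_eq {n : ℕ} (s : Fin n → ℂ) (hs : ∀ i, s i = 1 ∨ s i = -1) :
    ∃ p q : ℕ, p + q = n ∧ ∏ i, s i = (-1) ^ p ∧
      ∏ i, (1 + Polynomial.C (s i) * Polynomial.X) = krawtchoukGen p q := by
  have hprod {M : Type} [CommMonoid M] (f : ℂ → M) :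
      ∏ i, f (s i) = f (-1) ^ (Finset.univ.filter fun i => s i = -1).card *
        f 1 ^ (Finset.univ.filter fun i => ¬s i = -1).card := by
    rw [← Finset.prod_filter_mul_prod_filter_not Finset.univ fun i => s i = -1]
    congr 1
    · refine Finset.prod_eq_pow_card fun i hi => ?_
      rw [(Finset.mem_filter_univ i).mp hi]
    · refine Finset.prod_eq_pow_card fun i hi => ?_
      rw [(hs i).resolve_right ((Finset.mem_filter_univ i).mp hi)]
  refine ⟨_, _, (Finset.card_filter_add_card_filter_not fun i => s i = -1).trans (Finset.card_fin n), ?_,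
    (hprod fun c => 1 + Polynomial.C c * Polynomial.X).trans ?_⟩
  · simpa using hprod id
  · simp [krawtchoukGen, sub_eq_add_neg]

theorem Rhat_add_Rhat (r : ℕ) (u : ℂ) :
    Rhat r 1 u + Rhat r (-1) u = ∑ k ∈ Finset.range (r / 2 + 1),
      ((-1 : ℂ) ^ k * ∏ m ∈ Finset.range k, (u - (2 * (m : ℂ) + 1)) / (u + (2 * (m : ℂ) + 1))) •
        ((ppCh r 1 1 + ppCh r (-1) (-1)) * Pk r (r - 2 * k)) := by
  simp only [Rhat, ← Finset.sum_add_distrib, add_mul, smul_add]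

/-- `R̂^S(u) = (Π_{k=0}^{r−1}(u+k))·(R̂^{++}(u) + R̂^{−−}(u))`. -/
theorem RShat_eq_sum_Rhat (r : ℕ) (hr : 2 ≤ r) (u : ℂ)
    (hu : ∀ m : ℕ, 1 ≤ m → m ≤ r/2 → u + (2*(m:ℂ) - 1) ≠ 0) :
    RShat r u = (∏ k ∈ Finset.range r, (u + (k:ℂ))) • (Rhat r 1 u + Rhat r (-1) u) := by
  refine sub_eq_zero.mp (eq_zero_of_mul_eigenvector (fun i => Γgen r i ⊗ₜ[ℂ] Γgen r i) ?_ ?_ _ ?_)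
  · intro i
    rw [Algebra.TensorProduct.tmul_mul_tmul, Γgen_mul_self, Algebra.TensorProduct.one_def]
  · intro i j
    rcases eq_or_ne i j with rfl | hij
    · rfl
    · rw [Algebra.TensorProduct.tmul_mul_tmul, Algebra.TensorProduct.tmul_mul_tmul,
        Γgen_mul_comm_of_ne r hij, TensorProduct.neg_tmul, TensorProduct.tmul_neg, neg_neg]
  intro s w hs hw
  obtain ⟨p, q, hpq, hsp, hgen⟩ := exists_krawtchoukGen_eq s hs
  have hR := RShat_mul_eigenvector u hw
  have hT := ppCh_add_ppCh_mul_eigenvector hw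
  rw [hgen] at hR
  rw [hsp, ← pow_add] at hT
  rw [sub_mul, smul_mul_assoc, hR, Rhat_add_Rhat, Finset.sum_mul, sub_eq_zero]
  obtain ⟨d, hd, hdpq⟩ : ∃ d ≤ r, (p = r - d ∧ q = r + d) ∨ (p = r + d ∧ q = r - d) := by
    rcases le_total p r with h | h
    · exact ⟨r - p, by omega, by omega⟩
    · exact ⟨p - r, by omega, by omega⟩
  have hC := sC_mul_eigenvector (m := r - d) hr hw hgen hpq (by omega)
  have hP (k : ℕ) : Pk r (r - 2 * k) * w = if r - 2 * k = r - d then w else 0 :=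
    Pk_mul_eigenvector hr (Nat.sub_le _ _) (Nat.sub_le _ _) hC
  simp only [smul_mul_assoc, mul_assoc, hP, mul_ite, mul_zero, hT]
  rcases Nat.even_or_odd (r + p) with he | ho
  · obtain ⟨j, rfl⟩ : ∃ j, d = 2 * j := by
      obtain ⟨t, ht⟩ := he
      exact ⟨d / 2, by omega⟩
    have hev : shankarWittenEv r u (krawtchoukGen p q) =
        shankarWittenEv r u (krawtchoukGen (r - 2 * j) (r + 2 * j)) := by
      rcases hdpq with ⟨rfl, rfl⟩ | ⟨rfl, rfl⟩
      · rfl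
      · exact shankarWittenEv_comm _ _ _ _
    rw [hev, shankarWittenEv_krawtchoukGen r u hu j hd, he.neg_one_pow,
      Finset.sum_eq_single_of_mem j (by simp; omega)]
    · simp [smul_smul]
    · intro k hk hkj
      have hk : k ≤ r / 2 := by simpa [Nat.lt_succ_iff] using hk
      rw [if_neg (by omega), smul_zero]
  · simp [shankarWittenEv_eq_zero r u p q hpq ho, ho.neg_one_pow]

end
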